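/- Let d_R, d_f, d_P, d_B be positive integers with d_R·d_f = d_P·d_B, and let H_b = H_R = ℂ^{d_R}, H_f = ℂ^{d_f}, H_P = ℂ^{d_P}, H_B = ℂ^{d_B}. Fix unit vectors ψ_f ∈ H_f and e_P ∈ H_P, a unit vector ψ ∈ H_b ⊗ H_R, and a unitary W_b on H_b. For a unitary U : H_b ⊗ H_f → H_P ⊗ H_B define Ṽ_U : H_b → H_B by Ṽ_U(v) = √(d_P) · (⟨e_P| ⊗ I_B) U (v ⊗ ψ_f). Then, with μ the Haar probability measure on the unitary group of dimension d_P·d_B: ∫ ‖ Tr_R[ (Ṽ_U ⊗ I_R)(W_b ⊗ I_R) ψψ† (W_b† ⊗ I_R)(Ṽ_U† ⊗ I_R) ] − Tr_R[ (Ṽ_U ⊗ I_R) ψψ† (Ṽ_U† ⊗ I_R) ] ‖₂² dμ(U) ≤ 4 · Tr[ (Tr_R(ψψ†))² ], i.e. the Haar-averaged squared Frobenius norm is at most 4·e^{−S₂(b)_ψ}, where S₂(b)_ψ = −log Tr[(Tr_R(ψψ†))²] is the second Rényi entropy of ψ on the code factor H_b. -/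

import Mathlib

open scoped BigOperators Kronecker
open MeasureTheory

/-- The rank-one operator `|v⟩⟨v|` of a vector. -/
noncomputable def outer {n : Type*} (v : n → ℂ) : Matrix n n ℂ :=
  fun i j => v i * (starRingEnd ℂ) (v j)

/-- Partial trace over the second (right) tensor factor (`Tr_R`):
`(Tr_R ρ)_{i,j} = ∑ₖ ρ_{(i,k),(j,k)}`. -/
noncomputable def ptraceRight {a b : Type*} [Fintype b]
    (ρ : Matrix (a × b) (a × b) ℂ) : Matrix a a ℂ :=
  fun i j => ∑ k, ρ (i, k) (j, k)

/-- Squared Frobenius (Schatten-2) norm `‖M‖₂² = Tr(M†M) = ∑ |M_{ij}|²`. -/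
noncomputable def frobSq {n : Type*} [Fintype n] (M : Matrix n n ℂ) : ℝ :=
  ∑ i, ∑ j, ‖M i j‖ ^ 2

/-- The post-measurement encoding map `Ṽ_U : H_b → H_B`,
`Ṽ_U(v) = √(d_P) (⟨e_P| ⊗ I_B) U (v ⊗ ψ_f)`, written as a `d_B × d_R` matrix;
`e : Fin dR × Fin df ≃ Fin dP × Fin dB` identifies `H_b ⊗ H_f` with `H_P ⊗ H_B`. -/
noncomputable def Vtilde (dR df dP dB : ℕ)
    (e : Fin dR × Fin df ≃ Fin dP × Fin dB)
    (ψf : Fin df → ℂ) (eP : Fin dP → ℂ)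
    (U : Matrix (Fin dP × Fin dB) (Fin dP × Fin dB) ℂ) :
    Matrix (Fin dB) (Fin dR) ℂ :=
  fun k r => (Real.sqrt dP : ℂ) * ∑ p, (starRingEnd ℂ) (eP p) *
    ∑ y : Fin dP × Fin dB,
      U (p, k) y * (if (e.symm y).1 = r then ψf (e.symm y).2 else 0)

section UnitaryConjugation

open Matrix

variable {n : Type*} [Fintype n]

theorem frobSq_eq_trace (M : Matrix n n ℂ) : frobSq M = (trace (M * Mᴴ)).re := by
  simp only [frobSq, trace, diag_apply, mul_apply, conjTranspose_apply, Complex.re_sum]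
  refine Finset.sum_congr rfl fun i _ => Finset.sum_congr rfl fun j _ => ?_
  rw [Complex.star_def, Complex.mul_conj, Complex.ofReal_re, Complex.normSq_eq_norm_sq]

theorem frobSq_sub_le (A B : Matrix n n ℂ) :
    frobSq (A - B) ≤ 2 * (frobSq A + frobSq B) := by
  simp only [frobSq, Finset.mul_sum, ← Finset.sum_add_distrib]
  gcongr with i _ j _
  have h := parallelogram_law_with_norm ℝ (A i j) (B i j)
  rw [Matrix.sub_apply]
  nlinarith [sq_nonneg ‖A i j + B i j‖]

theorem frobSq_conj_of_conjTranspose_mul_self [DecidableEq n] {m : Type*} [Fintype m]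
    (S : Matrix m n ℂ) (hS : Sᴴ * S = 1) (M : Matrix n n ℂ) :
    frobSq (S * M * Sᴴ) = frobSq M := by
  have h : S * M * Sᴴ * (S * M * Sᴴ)ᴴ = S * (M * Mᴴ) * Sᴴ := by
    rw [conjTranspose_mul, conjTranspose_mul, conjTranspose_conjTranspose]
    calc S * M * Sᴴ * (S * (Mᴴ * Sᴴ)) = S * M * (Sᴴ * S) * (Mᴴ * Sᴴ) := by
          simp only [Matrix.mul_assoc]
      _ = _ := by rw [hS, Matrix.mul_one]; simp only [Matrix.mul_assoc]
  rw [frobSq_eq_trace, frobSq_eq_trace, h, trace_mul_comm, ← Matrix.mul_assoc, hS,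
    Matrix.one_mul]

variable [DecidableEq n]

instance compactSpace_unitaryGroup : CompactSpace (unitaryGroup n ℂ) := by
  refine (isCompact_iff_compactSpace (s := (unitaryGroup n ℂ : Set (Matrix n n ℂ)))).1 ?_
  have hK : IsCompact (Set.univ.pi fun _ : n => Set.univ.pi fun _ : n =>
      Metric.closedBall (0 : ℂ) 1) :=
    isCompact_univ_pi fun _ => isCompact_univ_pi fun _ => isCompact_closedBall _ _
  refine hK.of_isClosed_subset ?_ ?_
  · have h : ((unitaryGroup n ℂ : Set (Matrix n n ℂ))) = {A | A * star A = 1} := by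
      ext A
      exact mem_unitaryGroup_iff
    rw [h]
    exact isClosed_eq (by fun_prop) continuous_const
  · intro U hU i _ j _
    simpa using entry_norm_bound_of_unitary hU i j

theorem exists_unitary_row (v : n → ℂ) (hv : ∑ i, ‖v i‖ ^ 2 = 1) (i₀ : n) :
    ∃ G : unitaryGroup n ℂ, ∀ j, (G : Matrix n n ℂ) i₀ j = v j := by
  have hv' : ‖WithLp.toLp 2 v‖ = 1 := by
    rw [EuclideanSpace.norm_eq]
    simp [hv]
  obtain ⟨b, hb⟩ := Orthonormal.exists_orthonormalBasis_extension_of_card_eq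
    (𝕜 := ℂ) (E := EuclideanSpace ℂ n) (ι := n) (by simp)
    (v := fun _ => WithLp.toLp 2 v) (s := {i₀})
    ⟨fun _ => by simpa using hv', fun i j hij => (hij (Subsingleton.elim i j)).elim⟩
  refine ⟨⟨_, transpose_mem_unitaryGroup_iff.2
    ((EuclideanSpace.basisFun n ℂ).toMatrix_orthonormalBasis_mem_unitary b)⟩, fun j => ?_⟩
  simp [Module.Basis.toMatrix_apply, hb i₀ rfl]

theorem sum_sum_eq_of_diag_of_offDiag (f : n → n → ℝ) (x y : ℝ) (hx : ∀ i, f i i = x)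
    (hy : ∀ i j, i ≠ j → f i j = y) :
    ∑ i, ∑ j, f i j =
      Fintype.card n * x + Fintype.card n * (Fintype.card n - 1) * y := by
  have h : ∀ i j, f i j = y + if i = j then x - y else 0 := by
    intro i j
    split_ifs with hij
    · subst hij
      rw [hx]
      ring
    · rw [hy i j hij, add_zero]
  simp only [h, Finset.sum_add_distrib, Finset.sum_ite_eq, Finset.mem_univ, if_true,
    Finset.sum_const, Finset.card_univ, nsmul_eq_mul]
  ring

theorem continuous_unitary_conj_apply (Y : Matrix n n ℂ) (i j : n) :
    Continuous fun U : unitaryGroup n ℂ =>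
      ((U : Matrix n n ℂ) * Y * star (U : Matrix n n ℂ)) i j := by
  have h : Continuous fun U : unitaryGroup n ℂ =>
      ((U : Matrix n n ℂ) * Y * star (U : Matrix n n ℂ)) := by fun_prop
  exact h.matrix_elem i j

theorem frobSq_unitary_conj (U : unitaryGroup n ℂ) (Y : Matrix n n ℂ) :
    frobSq ((U : Matrix n n ℂ) * Y * star (U : Matrix n n ℂ)) = frobSq Y :=
  frobSq_conj_of_conjTranspose_mul_self _ (UnitaryGroup.star_mul_self U) Y

variable [MeasurableSpace (unitaryGroup n ℂ)] [BorelSpace (unitaryGroup n ℂ)]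
  (μ : Measure (unitaryGroup n ℂ)) [μ.IsHaarMeasure]

theorem integrable_unitaryGroup_of_continuous {f : unitaryGroup n ℂ → ℝ} (hf : Continuous f) :
    Integrable f μ :=
  hf.integrable_of_hasCompactSupport (HasCompactSupport.of_compactSpace f)

theorem integral_unitary_conj (Y : Matrix n n ℂ) (G : unitaryGroup n ℂ)
    (f : Matrix n n ℂ → ℝ) :
    ∫ U : unitaryGroup n ℂ, f (U * Y * star (U : Matrix n n ℂ)) ∂μ =
      ∫ U : unitaryGroup n ℂ,
        f (G * (U * Y * star (U : Matrix n n ℂ)) * star (G : Matrix n n ℂ)) ∂μ := by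
  rw [← integral_mul_left_eq_self _ G]
  refine integral_congr_ae (.of_forall fun U => ?_)
  simp only [UnitaryGroup.mul_val, star_mul, Matrix.mul_assoc]

theorem integral_normSq_unitary_conj_perm (Y : Matrix n n ℂ) (σ : Equiv.Perm n) (i j : n) :
    ∫ U : unitaryGroup n ℂ, ‖(U * Y * star (U : Matrix n n ℂ)) (σ i) (σ j)‖ ^ 2 ∂μ =
      ∫ U : unitaryGroup n ℂ, ‖(U * Y * star (U : Matrix n n ℂ)) i j‖ ^ 2 ∂μ := by
  have hG : (1 : Matrix n n ℂ).submatrix σ id ∈ unitaryGroup n ℂ := by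
    rw [mem_unitaryGroup_iff]
    ext k l
    simp [mul_apply, one_apply, star_apply, apply_ite]
  rw [integral_unitary_conj μ Y ⟨_, hG⟩ fun M => ‖M i j‖ ^ 2]
  refine integral_congr_ae (.of_forall fun U => ?_)
  beta_reduce
  generalize ((U : Matrix n n ℂ) * Y * star (U : Matrix n n ℂ)) = M
  simp [mul_apply, one_apply, star_apply, apply_ite]

theorem integral_normSq_unitary_conj_diag (Y : Matrix n n ℂ) (i : n) (v : n → ℂ)
    (hv : ∑ k, ‖v k‖ ^ 2 = 1) :
    ∫ U : unitaryGroup n ℂ, ‖(U * Y * star (U : Matrix n n ℂ)) i i‖ ^ 2 ∂μ =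
      ∫ U : unitaryGroup n ℂ,
        ‖v ⬝ᵥ ((U : Matrix n n ℂ) * Y * star (U : Matrix n n ℂ)) *ᵥ star v‖ ^ 2 ∂μ := by
  obtain ⟨G, hG⟩ := exists_unitary_row v hv i
  rw [integral_unitary_conj μ Y G fun M => ‖M i i‖ ^ 2]
  refine integral_congr_ae (.of_forall fun U => ?_)
  beta_reduce
  generalize ((U : Matrix n n ℂ) * Y * star (U : Matrix n n ℂ)) = M
  simp only [Matrix.mul_assoc]
  simp [mul_apply, dotProduct, mulVec, hG, star_apply]

theorem four_mul_integral_normSq_diag (Y : Matrix n n ℂ) {i j : n} (hij : i ≠ j) :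
    4 * ∫ U : unitaryGroup n ℂ, ‖(U * Y * star (U : Matrix n n ℂ)) i i‖ ^ 2 ∂μ =
      ∫ U : unitaryGroup n ℂ, ‖(U * Y * star (U : Matrix n n ℂ)) i i +
          (U * Y * star (U : Matrix n n ℂ)) j j‖ ^ 2 ∂μ +
        ∫ U : unitaryGroup n ℂ, ‖(U * Y * star (U : Matrix n n ℂ)) i j‖ ^ 2 ∂μ +
        ∫ U : unitaryGroup n ℂ, ‖(U * Y * star (U : Matrix n n ℂ)) j i‖ ^ 2 ∂μ := by
  have hc := continuous_unitary_conj_apply Y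
  have key : ∀ z : ℂ, ‖z‖ = 1 →
      4 * ∫ U : unitaryGroup n ℂ, ‖(U * Y * star (U : Matrix n n ℂ)) i i‖ ^ 2 ∂μ =
      ∫ U : unitaryGroup n ℂ, ‖(U * Y * star (U : Matrix n n ℂ)) i i +
          (U * Y * star (U : Matrix n n ℂ)) j j +
          star z * (U * Y * star (U : Matrix n n ℂ)) i j +
          z * (U * Y * star (U : Matrix n n ℂ)) j i‖ ^ 2 ∂μ := by
    intro z hz
    have hs' : ((Real.sqrt 2 : ℝ) : ℂ) * ((Real.sqrt 2 : ℝ) : ℂ) = 2 := by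
      rw [← Complex.ofReal_mul, Real.mul_self_sqrt (by norm_num)]
      norm_num
    have hs0 : ((Real.sqrt 2 : ℝ) : ℂ) ≠ 0 := by
      intro h
      rw [h] at hs'
      norm_num at hs'
    have hzz : z * star z = 1 := by
      simp [Complex.mul_conj, Complex.normSq_eq_norm_sq, hz]
    let v : n → ℂ := Pi.single i ((Real.sqrt 2 : ℝ) : ℂ)⁻¹ +
      Pi.single j (z * ((Real.sqrt 2 : ℝ) : ℂ)⁻¹)
    have hv : ∑ k, ‖v k‖ ^ 2 = 1 := by
      rw [Finset.sum_eq_add i j hij]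
      · simp [v, hij, hij.symm, hz]
        norm_num
      · intro k _ hk
        simp [v, hk.1, hk.2]
      · simp
      · simp
    rw [integral_normSq_unitary_conj_diag μ Y i v hv, ← integral_const_mul]
    refine integral_congr_ae (.of_forall fun U => ?_)
    beta_reduce
    generalize ((U : Matrix n n ℂ) * Y * star (U : Matrix n n ℂ)) = M
    have h : 2 * (v ⬝ᵥ M *ᵥ star v) = M i i + M j j + star z * M i j + z * M j i := by
      have hstar : star v = Pi.single i ((Real.sqrt 2 : ℝ) : ℂ)⁻¹ +
          Pi.single j (star z * ((Real.sqrt 2 : ℝ) : ℂ)⁻¹) := by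
        ext k
        simp only [v, Pi.star_apply, Pi.add_apply, Pi.single_apply, star_add]
        split_ifs <;> simp
      rw [hstar]
      simp only [v, mulVec_add, add_dotProduct, dotProduct_add, single_dotProduct,
        mulVec_single, Pi.smul_apply, MulOpposite.smul_eq_mul_unop, MulOpposite.unop_op, col_apply]
      rw [← hs']
      field_simp
      linear_combination M j j * hzz
    rw [← h, norm_mul, mul_pow]
    norm_num
  have h₁ := key 1 (by simp)
  have h₂ := key (-1) (by simp)
  have h₃ := key Complex.I (by simp)
  have h₄ := key (-Complex.I) (by simp)
  have hi : ∀ z : ℂ, Integrable (fun U : unitaryGroup n ℂ =>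
      ‖(U * Y * star (U : Matrix n n ℂ)) i i + (U * Y * star (U : Matrix n n ℂ)) j j +
          star z * (U * Y * star (U : Matrix n n ℂ)) i j +
          z * (U * Y * star (U : Matrix n n ℂ)) j i‖ ^ 2) μ := fun z =>
    integrable_unitaryGroup_of_continuous μ <|
      (((((hc i i).add (hc j j)).add ((hc i j).const_mul _)).add
        ((hc j i).const_mul _)).norm).pow 2
  have hsum : 4 * (4 * ∫ U : unitaryGroup n ℂ,
      ‖(U * Y * star (U : Matrix n n ℂ)) i i‖ ^ 2 ∂μ) = 4 * (
      ∫ U : unitaryGroup n ℂ, ‖(U * Y * star (U : Matrix n n ℂ)) i i +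
          (U * Y * star (U : Matrix n n ℂ)) j j‖ ^ 2 ∂μ +
        ∫ U : unitaryGroup n ℂ, ‖(U * Y * star (U : Matrix n n ℂ)) i j‖ ^ 2 ∂μ +
        ∫ U : unitaryGroup n ℂ, ‖(U * Y * star (U : Matrix n n ℂ)) j i‖ ^ 2 ∂μ) := by
    have hL : ∀ x : ℝ, 4 * x = x + x + x + x := fun x => by ring
    rw [hL (4 * _)]
    nth_rewrite 1 [h₁]
    nth_rewrite 1 [h₂]
    nth_rewrite 1 [h₃]
    rw [h₄]
    rw [← integral_add (hi _) (hi _), ← integral_add (integrable_unitaryGroup_of_continuous μ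
        (by fun_prop)) (hi _), ← integral_add (integrable_unitaryGroup_of_continuous μ
        (by fun_prop)) (hi _)]
    rw [← integral_add, ← integral_add, ← integral_const_mul]
    · refine integral_congr_ae (.of_forall fun U => ?_)
      beta_reduce
      generalize ((U : Matrix n n ℂ) * Y * star (U : Matrix n n ℂ)) = M
      simp only [← Complex.normSq_eq_norm_sq, Complex.normSq_apply]
      simp
      ring
    all_goals
      exact integrable_unitaryGroup_of_continuous μ (by fun_prop)
  linarith

theorem exists_integral_normSq_unitary_conj [Nonempty n] (Y : Matrix n n ℂ)
    (hY : trace Y = 0) :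
    ∃ a b : ℝ, 0 ≤ b ∧
      (∀ i, ∫ U : unitaryGroup n ℂ, ‖(U * Y * star (U : Matrix n n ℂ)) i i‖ ^ 2 ∂μ = a) ∧
      (∀ i j, i ≠ j →
        ∫ U : unitaryGroup n ℂ, ‖(U * Y * star (U : Matrix n n ℂ)) i j‖ ^ 2 ∂μ = b) ∧
      Fintype.card n * a = (Fintype.card n - 1) * b := by
  obtain ⟨a, ha⟩ : ∃ a : ℝ, ∀ i,
      ∫ U : unitaryGroup n ℂ, ‖(U * Y * star (U : Matrix n n ℂ)) i i‖ ^ 2 ∂μ = a := by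
    obtain ⟨i₀⟩ := ‹Nonempty n›
    refine ⟨∫ U : unitaryGroup n ℂ, ‖(U * Y * star (U : Matrix n n ℂ)) i₀ i₀‖ ^ 2 ∂μ,
      fun i => ?_⟩
    rw [← integral_normSq_unitary_conj_perm μ Y (Equiv.swap i i₀) i i, Equiv.swap_apply_left]
  obtain ⟨b, hb0, hb⟩ : ∃ b : ℝ, 0 ≤ b ∧ ∀ i j, i ≠ j →
      ∫ U : unitaryGroup n ℂ, ‖(U * Y * star (U : Matrix n n ℂ)) i j‖ ^ 2 ∂μ = b := by
    by_cases h : ∃ k l : n, k ≠ l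
    · obtain ⟨k, l, hkl⟩ := h
      refine ⟨∫ U : unitaryGroup n ℂ, ‖(U * Y * star (U : Matrix n n ℂ)) k l‖ ^ 2 ∂μ,
        integral_nonneg fun U => by positivity, fun i j hij => ?_⟩
      have hne : Equiv.swap i k j ≠ k := by
        intro h
        apply hij
        rw [← Equiv.swap_apply_left i k] at h
        exact ((Equiv.swap i k).injective (by simpa using h)).symm
      rw [← integral_normSq_unitary_conj_perm μ Y
        (Equiv.swap (Equiv.swap i k j) l * Equiv.swap i k) i j]
      simp only [Equiv.Perm.mul_apply, Equiv.swap_apply_left]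
      rw [Equiv.swap_apply_of_ne_of_ne hne.symm hkl]
    · push Not at h
      exact ⟨0, le_rfl, fun i j hij => (hij (h i j)).elim⟩
  refine ⟨a, b, hb0, ha, hb, ?_⟩
  have hc := continuous_unitary_conj_apply Y
  have hoff : ∀ i j, i ≠ j → ∫ U : unitaryGroup n ℂ,
      ‖(U * Y * star (U : Matrix n n ℂ)) i i +
        (U * Y * star (U : Matrix n n ℂ)) j j‖ ^ 2 ∂μ = 4 * a - 2 * b := by
    intro i j hij
    have h := four_mul_integral_normSq_diag μ Y hij
    rw [ha, hb i j hij, hb j i hij.symm] at h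
    linarith
  have hdiag : ∀ i, ∫ U : unitaryGroup n ℂ,
      ‖(U * Y * star (U : Matrix n n ℂ)) i i +
        (U * Y * star (U : Matrix n n ℂ)) i i‖ ^ 2 ∂μ = 4 * a := by
    intro i
    rw [← ha i, ← integral_const_mul]
    refine integral_congr_ae (.of_forall fun U => ?_)
    beta_reduce
    rw [← two_mul, norm_mul, mul_pow]
    norm_num
  have h := sum_sum_eq_of_diag_of_offDiag _ _ _ hdiag hoff
  have h' : ∑ i, ∑ j, ∫ U : unitaryGroup n ℂ, ‖(U * Y * star (U : Matrix n n ℂ)) i i +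
      (U * Y * star (U : Matrix n n ℂ)) j j‖ ^ 2 ∂μ =
      2 * Fintype.card n * (Fintype.card n * a) := by
    have hsum : (Fintype.card n : ℝ) * a = ∑ i, ∫ U : unitaryGroup n ℂ,
        ‖(U * Y * star (U : Matrix n n ℂ)) i i‖ ^ 2 ∂μ := by
      simp [ha]
    have hi : ∀ i j, Integrable (fun U : unitaryGroup n ℂ =>
        ‖(U * Y * star (U : Matrix n n ℂ)) i i +
          (U * Y * star (U : Matrix n n ℂ)) j j‖ ^ 2) μ := fun i j =>
      integrable_unitaryGroup_of_continuous μ (((hc i i).add (hc j j)).norm.pow 2)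
    simp only [hsum, ← integral_finsetSum _ fun j _ => hi _ j]
    rw [← integral_finsetSum _ fun i _ => integrable_finsetSum _ fun j _ => hi i j,
      ← integral_finsetSum _ fun i _ =>
        integrable_unitaryGroup_of_continuous μ (by fun_prop), ← integral_const_mul]
    refine integral_congr_ae (.of_forall fun U => ?_)
    have htr : ∑ i, ((U : Matrix n n ℂ) * Y * star (U : Matrix n n ℂ)) i i = 0 := by
      change trace ((U : Matrix n n ℂ) * Y * star (U : Matrix n n ℂ)) = 0
      rw [trace_mul_comm, ← Matrix.mul_assoc, UnitaryGroup.star_mul_self, Matrix.one_mul, hY]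
    beta_reduce
    generalize ((U : Matrix n n ℂ) * Y * star (U : Matrix n n ℂ)) = M at htr
    have hre : ∑ i, (M i i).re = 0 := by rw [← Complex.re_sum, htr, Complex.zero_re]
    have him : ∑ i, (M i i).im = 0 := by rw [← Complex.im_sum, htr, Complex.zero_im]
    have hexp : ∀ i j, ‖M i i + M j j‖ ^ 2 = ‖M i i‖ ^ 2 + ‖M j j‖ ^ 2 +
        2 * (M i i).re * (M j j).re + 2 * (M i i).im * (M j j).im := by
      intro i j
      simp only [← Complex.normSq_eq_norm_sq, Complex.normSq_apply, Complex.add_re,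
        Complex.add_im]
      ring
    simp only [hexp, Finset.sum_add_distrib, ← Finset.mul_sum, hre, him, mul_zero,
      Finset.sum_const, Finset.card_univ, nsmul_eq_mul, add_zero]
    ring
  have hD : (0 : ℝ) < Fintype.card n := by exact_mod_cast Fintype.card_pos
  rw [h'] at h
  have h2 : (2 * Fintype.card n : ℝ) * (Fintype.card n * a - (Fintype.card n - 1) * b) = 0 := by
    linear_combination -h
  rcases mul_eq_zero.1 h2 with h3 | h3
  · linarith
  · linarith

end UnitaryConjugation

section Compression

open Matrix

/-- The compression `⟨x| ⊗ I`, with `x` the row vector of coefficients. -/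
def bra {p : Type*} (b : Type*) [DecidableEq b] (x : p → ℂ) : Matrix b (p × b) ℂ :=
  of fun k y => x y.1 * (1 : Matrix b b ℂ) k y.2

theorem sq_card_mul_integral_frobSq_bra_le {p b : Type*} [Fintype p] [DecidableEq p] [Nonempty p]
    [Fintype b] [DecidableEq b] [Nonempty b]
    [MeasurableSpace (unitaryGroup (p × b) ℂ)] [BorelSpace (unitaryGroup (p × b) ℂ)]
    (μ : Measure (unitaryGroup (p × b) ℂ)) [μ.IsHaarMeasure] [IsProbabilityMeasure μ]
    (Y : Matrix (p × b) (p × b) ℂ) (hY : trace Y = 0) (x : p → ℂ) (hx : ∑ i, ‖x i‖ ^ 2 = 1) :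
    (Fintype.card p : ℝ) ^ 2 * ∫ U : unitaryGroup (p × b) ℂ,
      frobSq (bra b x *
        ((U : Matrix (p × b) (p × b) ℂ) * Y * star (U : Matrix (p × b) (p × b) ℂ)) *
          (bra b x)ᴴ) ∂μ ≤
      frobSq Y := by
  obtain ⟨p₀⟩ := ‹Nonempty p›
  obtain ⟨g, hg⟩ := exists_unitary_row x hx p₀
  let G : unitaryGroup (p × b) ℂ :=
    ⟨(g : Matrix p p ℂ) ⊗ₖ (1 : Matrix b b ℂ), kronecker_mem_unitary g.2 (one_mem _)⟩
  have hG : ∀ k y, bra b x k y = (G : Matrix (p × b) (p × b) ℂ) (p₀, k) y := by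
    intro k y
    simp [G, bra, hg]
  obtain ⟨a, c, hc0, ha, hc, hac⟩ := exists_integral_normSq_unitary_conj μ Y hY
  have hcont := continuous_unitary_conj_apply Y
  have hi : ∀ i j, Integrable (fun U : unitaryGroup (p × b) ℂ =>
      ‖(U * Y * star (U : Matrix (p × b) (p × b) ℂ)) i j‖ ^ 2) μ := fun i j =>
    integrable_unitaryGroup_of_continuous μ (by fun_prop)
  have hL : ∫ U : unitaryGroup (p × b) ℂ,
      frobSq (bra b x *
        ((U : Matrix (p × b) (p × b) ℂ) * Y * star (U : Matrix (p × b) (p × b) ℂ)) *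
          (bra b x)ᴴ) ∂μ =
      Fintype.card b * a + Fintype.card b * (Fintype.card b - 1) * c := by
    rw [← sum_sum_eq_of_diag_of_offDiag (fun k l : b => ∫ U : unitaryGroup (p × b) ℂ,
      ‖(U * Y * star (U : Matrix (p × b) (p × b) ℂ)) (p₀, k) (p₀, l)‖ ^ 2 ∂μ) a c
      (fun k => ha _) (fun k l hkl => hc _ _ (by simpa using hkl))]
    simp only [← integral_finsetSum _ fun j _ => hi _ (p₀, j)]
    rw [← integral_finsetSum _ fun i _ => integrable_finsetSum _ fun j _ => hi (p₀, i) (p₀, j),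
      integral_unitary_conj μ Y G fun M => ∑ k, ∑ l, ‖M (p₀, k) (p₀, l)‖ ^ 2]
    refine integral_congr_ae (.of_forall fun U => ?_)
    beta_reduce
    generalize ((U : Matrix (p × b) (p × b) ℂ) * Y *
      star (U : Matrix (p × b) (p × b) ℂ)) = M
    simp only [frobSq, mul_apply, conjTranspose_apply, star_apply, hG]
  have hR : frobSq Y = Fintype.card (p × b) * a +
      Fintype.card (p × b) * (Fintype.card (p × b) - 1) * c := by
    rw [← sum_sum_eq_of_diag_of_offDiag (fun i j : p × b => ∫ U : unitaryGroup (p × b) ℂ,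
      ‖(U * Y * star (U : Matrix (p × b) (p × b) ℂ)) i j‖ ^ 2 ∂μ) a c ha hc]
    simp only [← integral_finsetSum _ fun j _ => hi _ j]
    rw [← integral_finsetSum _ fun i _ => integrable_finsetSum _ fun j _ => hi i j]
    change _ = ∫ U : unitaryGroup (p × b) ℂ,
      frobSq ((U : Matrix (p × b) (p × b) ℂ) * Y * star (U : Matrix (p × b) (p × b) ℂ)) ∂μ
    simp [frobSq_unitary_conj]
  have hp : (1 : ℝ) ≤ Fintype.card p := by exact_mod_cast Fintype.card_pos
  rw [hL, hR]
  rw [Fintype.card_prod] at hac ⊢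
  push_cast at hac ⊢
  generalize (Fintype.card p : ℝ) = P at *
  generalize (Fintype.card b : ℝ) = B at *
  have h : P * B * a + P * B * (P * B - 1) * c - P ^ 2 * (B * a + B * (B - 1) * c) =
      (P - 1) * c := by
    linear_combination (1 - P) * hac
  nlinarith [mul_nonneg (sub_nonneg.2 hp) hc0]

theorem ptraceRight_outer {a b : Type*} [Fintype b] (v : a × b → ℂ) :
    ptraceRight (outer v) = of (fun i k => v (i, k)) * (of fun i k => v (i, k))ᴴ := by
  ext i j
  simp [ptraceRight, outer, mul_apply]

theorem ptraceRight_outer_kronecker_mulVec {a b c : Type*} [Fintype a] [Fintype b] [DecidableEq b]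
    (A : Matrix c a ℂ) (v : a × b → ℂ) :
    ptraceRight (outer ((A ⊗ₖ (1 : Matrix b b ℂ)) *ᵥ v)) =
      A * ptraceRight (outer v) * Aᴴ := by
  have h : (of fun i k => ((A ⊗ₖ (1 : Matrix b b ℂ)) *ᵥ v) (i, k)) =
      A * of fun i k => v (i, k) := by
    ext i k
    simp [mulVec, dotProduct, mul_apply, Fintype.sum_prod_type, one_apply]
  rw [ptraceRight_outer, ptraceRight_outer, h, conjTranspose_mul]
  simp only [Matrix.mul_assoc]

/-- The isometry `v ↦ v ⊗ φ`, read through an identification of the product index set. -/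
def ancilla {a f n : Type*} [DecidableEq a] (e : a × f ≃ n) (φ : f → ℂ) : Matrix n a ℂ :=
  of fun y r => if (e.symm y).1 = r then φ (e.symm y).2 else 0

theorem ancilla_conjTranspose_mul_self {a f n : Type*} [Fintype a] [DecidableEq a] [Fintype f]
    [Fintype n] (e : a × f ≃ n) (φ : f → ℂ) (hφ : ∑ i, ‖φ i‖ ^ 2 = 1) :
    (ancilla e φ)ᴴ * ancilla e φ = 1 := by
  have hφ' : ∑ i, star (φ i) * φ i = 1 := by
    simp only [Complex.star_def, Complex.conj_mul', ← Complex.ofReal_pow, ← Complex.ofReal_sum, hφ,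
      Complex.ofReal_one]
  ext r s
  rw [mul_apply, ← e.sum_comp, Fintype.sum_prod_type]
  by_cases h : r = s
  · subst h
    simp only [ancilla, conjTranspose_apply, of_apply, Equiv.symm_apply_apply, one_apply_eq]
    rw [Finset.sum_eq_single r]
    · simpa using hφ'
    · intro k _ hk
      simp [hk]
    · simp
  · rw [one_apply_ne h]
    refine Finset.sum_eq_zero fun k _ => Finset.sum_eq_zero fun l _ => ?_
    simp only [ancilla, conjTranspose_apply, of_apply, Equiv.symm_apply_apply]
    by_cases hk : k = r
    · simp [hk, h]
    · simp [hk]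

theorem Vtilde_eq (dR df dP dB : ℕ) (e : Fin dR × Fin df ≃ Fin dP × Fin dB)
    (ψf : Fin df → ℂ) (eP : Fin dP → ℂ) (U : Matrix (Fin dP × Fin dB) (Fin dP × Fin dB) ℂ) :
    Vtilde dR df dP dB e ψf eP U =
      (Real.sqrt dP : ℂ) • (bra (Fin dB) (star eP) * U * ancilla e ψf) := by
  ext k r
  rw [Matrix.mul_assoc, Matrix.smul_apply, mul_apply, Fintype.sum_prod_type]
  simp [Vtilde, bra, ancilla, mul_apply, one_apply]

theorem frobSq_smul {n : Type*} [Fintype n] (c : ℂ) (M : Matrix n n ℂ) :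
    frobSq (c • M) = ‖c‖ ^ 2 * frobSq M := by
  simp [frobSq, Finset.mul_sum, mul_pow]

end Compression

/-- **Haar-averaged decoupling bound from the reference (equation (5.21)).**
For a Haar-random unitary `U : H_b ⊗ H_f → H_P ⊗ H_B` followed by a projective
measurement `⟨e_P|` on `H_P`, the average squared Frobenius norm of
`Tr_R[Ṽ_U W_b ψψ† W_b† Ṽ_U†] − Tr_R[Ṽ_U ψψ† Ṽ_U†]` is at most
`4·Tr[(Tr_R(ψψ†))²] = 4·e^{−S₂(b)_ψ}`. -/
theorem haar_decoupling_bound_R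
    (dR df dP dB : ℕ) (hdR : 0 < dR) (hdf : 0 < df) (hdP : 0 < dP) (hdB : 0 < dB)
    (hdim : dR * df = dP * dB)
    (e : Fin dR × Fin df ≃ Fin dP × Fin dB)
    (ψf : Fin df → ℂ) (hψf : ∑ i, ‖ψf i‖ ^ 2 = 1)
    (eP : Fin dP → ℂ) (heP : ∑ i, ‖eP i‖ ^ 2 = 1)
    (ψ : Fin dR × Fin dR → ℂ) (hψ : ∑ i, ‖ψ i‖ ^ 2 = 1)
    (Wb : Matrix (Fin dR) (Fin dR) ℂ) (hWb : Wb ∈ Matrix.unitaryGroup (Fin dR) ℂ)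
    [MeasurableSpace (Matrix.unitaryGroup (Fin dP × Fin dB) ℂ)]
    [BorelSpace (Matrix.unitaryGroup (Fin dP × Fin dB) ℂ)]
    (μ : Measure (Matrix.unitaryGroup (Fin dP × Fin dB) ℂ))
    [μ.IsHaarMeasure] [IsProbabilityMeasure μ] :
    (∫ U : Matrix.unitaryGroup (Fin dP × Fin dB) ℂ,
      frobSq
        (ptraceRight (outer
            ((((Vtilde dR df dP dB e ψf eP U * Wb) ⊗ₖ (1 : Matrix (Fin dR) (Fin dR) ℂ)).mulVec ψ)))
          - ptraceRight (outer
            ((((Vtilde dR df dP dB e ψf eP U) ⊗ₖ (1 : Matrix (Fin dR) (Fin dR) ℂ)).mulVec ψ)))) ∂μ)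
      ≤ 4 * (Matrix.trace (ptraceRight (outer ψ) * ptraceRight (outer ψ))).re := by
  have : Nonempty (Fin dP) := ⟨⟨0, hdP⟩⟩
  have : Nonempty (Fin dB) := ⟨⟨0, hdB⟩⟩
  set ρ := ptraceRight (outer ψ) with hρ
  have hρH : ρ.conjTranspose = ρ := by
    rw [hρ, ptraceRight_outer, Matrix.conjTranspose_mul, Matrix.conjTranspose_conjTranspose]
  have hW : Wb.conjTranspose * Wb = 1 := Matrix.mem_unitaryGroup_iff'.1 hWb
  set X := Wb * ρ * Wb.conjTranspose - ρ with hX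
  have hXtr : X.trace = 0 := by
    rw [hX, Matrix.trace_sub, Matrix.trace_mul_comm, ← Matrix.mul_assoc, hW, Matrix.one_mul,
      sub_self]
  have hXfrob : frobSq X ≤ 4 * (Matrix.trace (ρ * ρ)).re := by
    have h := frobSq_sub_le (Wb * ρ * Wb.conjTranspose) ρ
    rw [frobSq_conj_of_conjTranspose_mul_self _ hW] at h
    have h' := frobSq_eq_trace ρ
    rw [hρH] at h'
    linarith
  set S := ancilla e ψf
  have hS : S.conjTranspose * S = 1 := ancilla_conjTranspose_mul_self e ψf hψf
  have hYtr : (S * X * S.conjTranspose).trace = 0 := by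
    rw [Matrix.trace_mul_comm, ← Matrix.mul_assoc, hS, Matrix.one_mul, hXtr]
  have key := sq_card_mul_integral_frobSq_bra_le μ _ hYtr (star eP) (by simpa using heP)
  rw [frobSq_conj_of_conjTranspose_mul_self S hS, ← integral_const_mul] at key
  refine (le_of_eq ?_).trans (key.trans hXfrob)
  refine integral_congr_ae (.of_forall fun U => ?_)
  beta_reduce
  rw [ptraceRight_outer_kronecker_mulVec, ptraceRight_outer_kronecker_mulVec, Vtilde_eq, ← hρ]
  have hscale : ‖((Real.sqrt dP : ℂ) * star (Real.sqrt dP : ℂ))‖ ^ 2 =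
      (Fintype.card (Fin dP) : ℝ) ^ 2 := by
    simp [← pow_two, ← Complex.ofReal_pow]
  rw [← hscale, ← frobSq_smul]
  congr 1
  simp only [hX, Matrix.conjTranspose_mul, Matrix.conjTranspose_smul, Matrix.smul_mul,
    Matrix.mul_smul, smul_smul, Matrix.mul_sub, Matrix.sub_mul, smul_sub, Matrix.mul_assoc,
    Matrix.star_eq_conjTranspose, S]
  rw [mul_comm]
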